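/- For all real n×n matrices P and Q, the quantity 2(‖P‖² ‖Q‖² − trace(Pᵀ Q)²) − ‖PQ − QP‖² is nonnegative, where ‖·‖ denotes the Frobenius norm. -/

import Mathlib

open Matrix

/-- A weighted form of the bound of the variance by half the sum of squares. -/
lemma weighted_variance_le {ι : Type*} [Fintype ι] (p x : ι → ℝ) (hp : ∀ i, 0 ≤ p i) :
    2 * ((∑ i, p i) * ∑ i, p i * x i ^ 2 - (∑ i, p i * x i) ^ 2) ≤
      (∑ i, p i) ^ 2 * ∑ i, x i ^ 2 := by
  classical
  cases isEmpty_or_nonempty ι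
  · simp
  obtain ⟨a, ha⟩ := Finite.exists_max x
  obtain ⟨b, hb⟩ := Finite.exists_min x
  have hab : (x a - x b) ^ 2 ≤ 2 * ∑ i, x i ^ 2 := by
    by_cases h : a = b
    · subst h
      simpa using Finset.sum_nonneg fun i _ => sq_nonneg (x i)
    · have hsub : ∑ i ∈ {a, b}, x i ^ 2 ≤ ∑ i, x i ^ 2 :=
        Finset.sum_le_sum_of_subset_of_nonneg (Finset.subset_univ _)
          fun i _ _ => sq_nonneg (x i)
      rw [Finset.sum_pair h] at hsub
      nlinarith [sq_nonneg (x a + x b)]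
  set c := (x a + x b) / 2 with hc
  have hdev : ∑ i, p i * (x i - c) ^ 2 ≤ (∑ i, p i) * ((x a - x b) ^ 2 / 4) := by
    rw [Finset.sum_mul]
    refine Finset.sum_le_sum fun i _ => mul_le_mul_of_nonneg_left ?_ (hp i)
    rw [hc]
    nlinarith [mul_nonneg (sub_nonneg.2 (ha i)) (sub_nonneg.2 (hb i))]
  have hexpand : ∑ i, p i * (x i - c) ^ 2 =
      ∑ i, p i * x i ^ 2 - 2 * c * ∑ i, p i * x i + c ^ 2 * ∑ i, p i := by
    simp only [Finset.mul_sum, ← Finset.sum_sub_distrib, ← Finset.sum_add_distrib]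
    exact Finset.sum_congr rfl fun i _ => by ring
  have hs : 0 ≤ ∑ i, p i := Finset.sum_nonneg fun i _ => hp i
  have hdev' := mul_le_mul_of_nonneg_left hdev hs
  rw [hexpand] at hdev'
  nlinarith [sq_nonneg (∑ i, p i * x i - c * ∑ i, p i),
    mul_le_mul_of_nonneg_left hab (sq_nonneg (∑ i, p i))]

namespace Matrix

variable {ι : Type*} [Fintype ι]

lemma trace_transpose_mul_eq_sum (A B : Matrix ι ι ℝ) :
    trace (Aᵀ * B) = ∑ i, ∑ j, A i j * B i j := by
  simp only [trace, diag_apply, mul_apply, transpose_apply]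
  exact Finset.sum_comm

lemma trace_transpose_mul_self_nonneg (A : Matrix ι ι ℝ) : 0 ≤ trace (Aᵀ * A) := by
  rw [trace_transpose_mul_eq_sum]
  exact Finset.sum_nonneg fun i _ => Finset.sum_nonneg fun j _ => mul_self_nonneg _

lemma sq_trace_transpose_mul_le (A B : Matrix ι ι ℝ) :
    trace (Aᵀ * B) ^ 2 ≤ trace (Aᵀ * A) * trace (Bᵀ * B) := by
  simp only [trace_transpose_mul_eq_sum, ← Fintype.sum_prod_type', ← sq]
  exact Finset.sum_mul_sq_le_sq_mul_sq _ _ _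

lemma variance_diagonal_le [DecidableEq ι] (p : ι → ℝ) (hp : ∀ i, 0 ≤ p i)
    (X : Matrix ι ι ℝ) :
    (∑ i, p i) * trace (diagonal p * (X * Xᵀ + Xᵀ * X)) - 2 * trace (diagonal p * X) ^ 2 ≤
      (∑ i, p i) ^ 2 * trace (Xᵀ * X) := by
  set s := ∑ i, p i
  have hs0 : 0 ≤ s := Finset.sum_nonneg fun i _ => hp i
  have htr : trace (diagonal p * (X * Xᵀ + Xᵀ * X)) =
      ∑ i, ∑ j, (p i + p j) * X i j ^ 2 := by
    simp only [trace, diag_apply, diagonal_mul]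
    simp only [add_apply, mul_apply, transpose_apply, mul_add, add_mul,
      Finset.sum_add_distrib, Finset.mul_sum]
    congr 1
    · simp only [sq]
    · rw [Finset.sum_comm]
      simp only [sq]
  have hX : trace (Xᵀ * X) = ∑ i, ∑ j, X i j ^ 2 := by
    simp only [trace_transpose_mul_eq_sum, sq]
  have hdiag := weighted_variance_le p (fun i => X i i) hp
  have hentry : ∀ i j, s * ((p i + p j) * X i j ^ 2) - s ^ 2 * X i j ^ 2 ≤
      if i = j then 2 * s * (p i * X i i ^ 2) - s ^ 2 * X i i ^ 2 else 0 := by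
    intro i j
    split_ifs with h
    · subst h
      exact le_of_eq (by ring)
    · have hsub : ∑ k ∈ {i, j}, p k ≤ s :=
        Finset.sum_le_sum_of_subset_of_nonneg (Finset.subset_univ _) fun k _ _ => hp k
      rw [Finset.sum_pair h] at hsub
      nlinarith [mul_nonneg (mul_nonneg hs0 (sub_nonneg.2 hsub)) (sq_nonneg (X i j))]
  have hsum := Finset.sum_le_sum fun i (_ : i ∈ Finset.univ) =>
    Finset.sum_le_sum fun j (_ : j ∈ Finset.univ) => hentry i j
  simp only [Finset.sum_ite_eq, Finset.mem_univ, if_true, Finset.sum_sub_distrib,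
    ← Finset.mul_sum] at hsum
  have hdX : trace (diagonal p * X) = ∑ i, p i * X i i := by
    simp [trace, diagonal_mul]
  rw [htr, hX, hdX]
  linarith

/-- The variance of a matrix in a state `S` (not normalized) is at most half its squared
Frobenius norm. -/
lemma PosSemidef.variance_le {S : Matrix ι ι ℝ} (hS : S.PosSemidef) (X : Matrix ι ι ℝ) :
    trace S * trace (S * (X * Xᵀ + Xᵀ * X)) - 2 * trace (S * X) ^ 2 ≤
      trace S ^ 2 * trace (Xᵀ * X) := by
  classical
  obtain ⟨U, p, hUU, hp, hSU⟩ : ∃ (U : Matrix ι ι ℝ) (p : ι → ℝ), U * Uᵀ = 1 ∧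
      (∀ i, 0 ≤ p i) ∧ S = U * diagonal p * Uᵀ := by
    refine ⟨hS.1.eigenvectorUnitary, hS.1.eigenvalues, ?_, hS.eigenvalues_nonneg, ?_⟩
    · simpa [star_eq_conjTranspose] using Unitary.coe_mul_star_self hS.1.eigenvectorUnitary
    · simpa [Unitary.conjStarAlgAut_apply, star_eq_conjTranspose, Function.comp_def] using
        hS.1.spectral_theorem
  have hUU' : Uᵀ * U = 1 := mul_eq_one_comm.1 hUU
  have hconj : ∀ A : Matrix ι ι ℝ, trace (Uᵀ * A * U) = trace A := fun A => by
    rw [trace_mul_comm, ← Matrix.mul_assoc, hUU, Matrix.one_mul]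
  have hmul : ∀ A B : Matrix ι ι ℝ, (Uᵀ * A * U) * (Uᵀ * B * U) = Uᵀ * (A * B) * U :=
    fun A B => by
      calc _ = Uᵀ * A * (U * Uᵀ) * B * U := by simp only [Matrix.mul_assoc]
        _ = _ := by rw [hUU]; simp only [Matrix.mul_assoc, Matrix.one_mul]
  have hadd : ∀ A B : Matrix ι ι ℝ, Uᵀ * A * U + Uᵀ * B * U = Uᵀ * (A + B) * U :=
    fun A B => by rw [Matrix.mul_add, Matrix.add_mul]
  have hdiag : diagonal p = Uᵀ * S * U := by
    calc diagonal p = (Uᵀ * U) * diagonal p * (Uᵀ * U) := by simp [hUU']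
      _ = _ := by rw [hSU]; simp only [Matrix.mul_assoc]
  have htranspose : (Uᵀ * X * U)ᵀ = Uᵀ * Xᵀ * U := by
    simp [transpose_mul, Matrix.mul_assoc]
  have hvar := variance_diagonal_le p hp (Uᵀ * X * U)
  rw [← trace_diagonal p] at hvar
  simpa only [htranspose, hdiag, hmul, hadd, hconj] using hvar

lemma trace_commutator_add_trace_anticommutator (X Y : Matrix ι ι ℝ) :
    trace ((X * Y - Y * X)ᵀ * (X * Y - Y * X)) +
        trace ((Xᵀ * Y + Y * Xᵀ)ᵀ * (Xᵀ * Y + Y * Xᵀ)) =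
      trace ((Yᵀ * Y + Y * Yᵀ) * (X * Xᵀ + Xᵀ * X)) := by
  have hcycle : ∀ A B C D : Matrix ι ι ℝ,
      trace (A * (B * (C * D))) = trace (B * (C * (D * A))) := fun A B C D => by
    rw [trace_mul_comm]
    simp only [Matrix.mul_assoc]
  simp only [transpose_sub, transpose_add, transpose_mul, transpose_transpose, Matrix.mul_add,
    Matrix.add_mul, Matrix.mul_sub, Matrix.sub_mul, trace_add, trace_sub, Matrix.mul_assoc]
  linarith [hcycle Y Yᵀ Xᵀ X, hcycle Xᵀ Yᵀ X Y, hcycle Xᵀ Yᵀ Y X, hcycle Y Yᵀ X Xᵀ,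
    hcycle X Yᵀ Xᵀ Y, hcycle X Yᵀ Y Xᵀ]

/-- The Böttcher–Wenzel inequality. -/
lemma trace_commutator_le (X Y : Matrix ι ι ℝ) :
    trace ((X * Y - Y * X)ᵀ * (X * Y - Y * X)) ≤ 2 * (trace (Xᵀ * X) * trace (Yᵀ * Y)) := by
  rcases (trace_transpose_mul_self_nonneg Y).eq_or_lt with h | h
  · have hY : Y = 0 := by
      rw [← trace_conjTranspose_mul_self_eq_zero_iff, conjTranspose_eq_transpose_of_trivial, h]
    simp [hY]
  have hS : (Yᵀ * Y + Y * Yᵀ).PosSemidef := by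
    simpa only [conjTranspose_eq_transpose_of_trivial] using
      (posSemidef_conjTranspose_mul_self Y).add (posSemidef_self_mul_conjTranspose Y)
  have hvar := hS.variance_le X
  have htrS : trace (Yᵀ * Y + Y * Yᵀ) = 2 * trace (Yᵀ * Y) := by
    rw [trace_add, trace_mul_comm Y, two_mul]
  have hcs := sq_trace_transpose_mul_le Y (Xᵀ * Y + Y * Xᵀ)
  have hpair : trace (Yᵀ * (Xᵀ * Y + Y * Xᵀ)) = trace ((Yᵀ * Y + Y * Yᵀ) * X) := by
    rw [← trace_transpose ((Yᵀ * Y + Y * Yᵀ) * X)]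
    simp only [transpose_mul, transpose_add, transpose_transpose, Matrix.mul_add, trace_add]
    rw [trace_mul_comm Yᵀ (Xᵀ * Y), trace_mul_comm Yᵀ (Y * Xᵀ), Matrix.mul_assoc,
      Matrix.mul_assoc, trace_mul_comm Y (Xᵀ * Yᵀ), Matrix.mul_assoc, add_comm]
  rw [htrS, ← trace_commutator_add_trace_anticommutator] at hvar
  rw [hpair] at hcs
  refine le_of_mul_le_mul_left ?_ h
  linarith

end Matrix

/-- The Böttcher–Wenzel inequality: for real n×n matrices `P, Q`,
`2(‖P‖²‖Q‖² − trace(PᵀQ)²) − ‖PQ − QP‖² ≥ 0`, Frobenius norm. -/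
theorem bw_nonneg (n : ℕ) (P Q : Matrix (Fin n) (Fin n) ℝ) :
    0 ≤ 2 * (Matrix.trace (Pᵀ * P) * Matrix.trace (Qᵀ * Q) -
        (Matrix.trace (Pᵀ * Q)) ^ 2) -
      Matrix.trace ((P * Q - Q * P)ᵀ * (P * Q - Q * P)) := by
  rcases (trace_transpose_mul_self_nonneg P).eq_or_lt with h | h
  · have hP : P = 0 := by
      rw [← trace_conjTranspose_mul_self_eq_zero_iff, conjTranspose_eq_transpose_of_trivial, h]
    simp [hP]
  set t := trace (Pᵀ * Q) / trace (Pᵀ * P) with ht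
  have hbound := trace_commutator_le P (Q - t • P)
  have hcomm : P * (Q - t • P) - (Q - t • P) * P = P * Q - Q * P := by
    simp [Matrix.mul_sub, Matrix.sub_mul]
  have hsymm : trace (Qᵀ * P) = trace (Pᵀ * Q) := by
    rw [← trace_transpose, transpose_mul, transpose_transpose]
  have hnorm : trace ((Q - t • P)ᵀ * (Q - t • P)) =
      trace (Qᵀ * Q) - 2 * t * trace (Pᵀ * Q) + t ^ 2 * trace (Pᵀ * P) := by
    simp only [transpose_sub, transpose_smul, Matrix.mul_sub, Matrix.sub_mul, trace_sub,
      Matrix.smul_mul, Matrix.mul_smul, trace_smul, smul_eq_mul, hsymm]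
    ring
  have hproj : trace (Pᵀ * P) * trace ((Q - t • P)ᵀ * (Q - t • P)) =
      trace (Pᵀ * P) * trace (Qᵀ * Q) - trace (Pᵀ * Q) ^ 2 := by
    rw [hnorm, ht]
    field_simp
    ring
  rw [hcomm, hproj] at hbound
  linarith
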